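/- Assume q ≡ 3 (mod 4). Let p and r be distinct internal points such that the line through p and r is a secant. Then |U_{p,I∖N(r)} ∩ [4]| is even, and |U_{p,I∖N(r)} ∩ [π]| is even for every nonzero square π ≠ 4 with π-4 a nonsquare. (Equivalently: if |U_{p,I∖N(r)} ∩ C| is odd for C among {1}, [4], the classes [θ], and the classes [π], then C = {1} or C = [θ] for some θ.) -/

import Mathlib

/-!
Let `ℓ = [b0,b1,b2]` be the secant through `p` and `r`, with discriminant `D = b1² - 4 b0 b2`, a
nonzero square, and let `S` be the reflection of the plane whose axis is `ℓ` and whose centre is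
the pole of `ℓ`. It fixes the vectors of `p` and `r` and preserves the conic, so `M ↦ S M S` is an
involution on each of the sets in question (`conj_mem_Hset`, `transfer_mem`). The point is that it
has no fixed points there.

The elements of `H` are the symmetric squares `symSq g` of `g ∈ SL(2,q)`, with
`tr (symSq g) + 1 = (tr g)²`, and `S = D⁻¹ symSq E` for the trace-zero matrix
`E = (-b1, 2 b0; -2 b2, b1)` satisfying `E² = D`. If `S (symSq g) S = symSq g`, then
`E g = ± g E`. The sign `-` forces `tr g = 0`. The sign `+` forces `g = x + y E`, so that
`(tr g)² - 4 = 4 y² D` is a square, which vanishes only if `y = 0`, i.e. `g = ± 1`. Neither happens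
in `[4]` or in a class `[π]` (`fixed_cases`), so both cardinalities are even (`even_ncard`).
-/

open scoped Classical

noncomputable section

namespace ConicPaper

variable (K : Type) [Field K] [Fintype K]

/-- Points (and also lines, via homogeneous coordinates) of `PG(2,q)`. -/
abbrev Pt := Projectivization K (Fin 3 → K)

instance : Fintype (Pt K) := @Fintype.ofFinite _ (Quotient.finite _)

/-- `a` is a nonsquare in `K`. -/
def Nonsq (a : K) : Prop := ¬ IsSquare a

/-- The quadratic form `Q(x0,x1,x2) = x1^2 - x0*x2` defining the conic. -/
def Qf (v : Fin 3 → K) : K := v 1 ^ 2 - v 0 * v 2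

/-- A point is internal when `Q` of (a representative of) it is a nonsquare. -/
def Internal (p : Pt K) : Prop := Nonsq K (Qf K p.rep)

/-- A point is external when `Q` of it is a nonzero square. -/
def External (p : Pt K) : Prop := Qf K p.rep ≠ 0 ∧ IsSquare (Qf K p.rep)

/-- The point `p` lies on the line `ℓ = [b0,b1,b2]`. -/
def OnL (p ℓ : Pt K) : Prop :=
  p.rep 0 * ℓ.rep 0 + p.rep 1 * ℓ.rep 1 + p.rep 2 * ℓ.rep 2 = 0

/-- Discriminant `b1^2 - 4 b0 b2` of a line. -/
def lineDisc (ℓ : Pt K) : K := ℓ.rep 1 ^ 2 - 4 * ℓ.rep 0 * ℓ.rep 2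

/-- A line is a passant when its discriminant is a nonsquare. -/
def Passant (ℓ : Pt K) : Prop := Nonsq K (lineDisc K ℓ)

/-- A line is a secant when its discriminant is a nonzero square. -/
def Secant (ℓ : Pt K) : Prop := lineDisc K ℓ ≠ 0 ∧ IsSquare (lineDisc K ℓ)

/-- The incidence pairing of the vector `w` with the polar line
`p^⊥ = [z, -2y, x]` of the point `p = (x,y,z)`. -/
def perpDot (p : Pt K) (w : Fin 3 → K) : K :=
  w 0 * p.rep 2 + w 1 * (-2 * p.rep 1) + w 2 * p.rep 0

/-- The point `r` lies on the passant line `p^⊥`. -/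
def OnPerp (p r : Pt K) : Prop := perpDot K p r.rep = 0

/-- The (finite) set `I` of internal points, as a type. -/
abbrev Ipts := {p : Pt K // Internal K p}

instance : Fintype (Ipts K) := Fintype.ofFinite _

/-- `N(p)`: the internal points lying on at least one passant line through `p`;
`p` itself is excluded when `q ≡ 1 (mod 4)` and included when `q ≡ 3 (mod 4)`. -/
def NbhdSet (p : Pt K) : Set (Pt K) :=
  if Fintype.card K % 4 = 1 then
    {r | Internal K r ∧ r ≠ p ∧ ∃ ℓ, Passant K ℓ ∧ OnL K p ℓ ∧ OnL K r ℓ}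
  else
    {r | Internal K r ∧ ∃ ℓ, Passant K ℓ ∧ OnL K p ℓ ∧ OnL K r ℓ}

/-- The line through `p` and `r` is a passant. -/
def PassantThru (p r : Pt K) : Prop := ∃ ℓ, OnL K p ℓ ∧ OnL K r ℓ ∧ Passant K ℓ

/-- The line through `p` and `r` is a secant. -/
def SecantThru (p r : Pt K) : Prop := ∃ ℓ, OnL K p ℓ ∧ OnL K r ℓ ∧ Secant K ℓ

/-- The action of a (nonsingular) matrix `M` on points of `PG(2,q)`:
`p ↦ p·M`.  (If `p.rep ᵥ* M` were zero -- impossible for invertible `M` --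
we return `p`, making the function total.) -/
def actPt (M : Matrix (Fin 3) (Fin 3) K) (p : Pt K) : Pt K :=
  if h : Matrix.vecMul p.rep M ≠ 0 then Projectivization.mk K (Matrix.vecMul p.rep M) h else p

/-- The group `H ≅ PSL(2,q)`, given by its set of matrix representatives. -/
def Hset : Set (Matrix (Fin 3) (Fin 3) K) :=
  {M | ∃ a b c d : K, a * d - b * c = 1 ∧
    M = !![a^2, a*b, b^2; 2*a*c, a*d + b*c, 2*b*d; c^2, c*d, d^2]}

/-- The class set `{g ∈ H : T(g) = tr(g) + 1 = s}` for `s ∈ F_q`. -/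
def classOf (s : K) : Set (Matrix (Fin 3) (Fin 3) K) :=
  {g | g ∈ Hset K ∧ Matrix.trace g + 1 = s}

/-- The class set `[4] = {g ∈ H : T(g) = 4, g ≠ 1}`. -/
def class4 : Set (Matrix (Fin 3) (Fin 3) K) :=
  {g | g ∈ Hset K ∧ Matrix.trace g + 1 = 4 ∧ g ≠ 1}

/-- `U_{p,W} = {h ∈ H : p^h ∈ W}`. -/
def Uset (p : Pt K) (W : Set (Pt K)) : Set (Matrix (Fin 3) (Fin 3) K) :=
  {M | M ∈ Hset K ∧ actPt K M p ∈ W}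

set_option linter.unusedSectionVars false

/-! ### Symmetric squares and the reflection in a line -/

variable {K}

/-- The action of the 2×2 matrix `(a, b; c, d)` on the symmetric square of `K²`, written in the
coordinates for which `(s, t) ↦ (s², s t, t²)` is equivariant for right multiplication. -/
def symSq (a b c d : K) : Matrix (Fin 3) (Fin 3) K :=
  !![a^2, a*b, b^2; 2*a*c, a*d + b*c, 2*b*d; c^2, c*d, d^2]

/-- The discriminant of the line with coordinate vector `b`. -/
def disc (b : Fin 3 → K) : K := b 1 ^ 2 - 4 * b 0 * b 2

/-- The reflection whose axis is the line `b` and whose centre is the pole of `b` (meaningful when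
`disc b ≠ 0`), as the rescaled symmetric square of the trace-zero matrix fixing the two points of
the conic on `b`. -/
def axisRefl (b : Fin 3 → K) : Matrix (Fin 3) (Fin 3) K :=
  (disc b)⁻¹ • symSq (-b 1) (2 * b 0) (-2 * b 2) (b 1)

theorem symSq_mul (a b c d a' b' c' d' : K) :
    symSq a b c d * symSq a' b' c' d' =
      symSq (a*a' + b*c') (a*b' + b*d') (c*a' + d*c') (c*b' + d*d') := by
  ext i j
  fin_cases i <;> fin_cases j <;> simp [symSq, Matrix.mul_apply, Fin.sum_univ_three] <;> ring

theorem symSq_smul (k a b c d : K) :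
    symSq (k * a) (k * b) (k * c) (k * d) = k ^ 2 • symSq a b c d := by
  ext i j
  fin_cases i <;> fin_cases j <;> simp [symSq] <;> ring

theorem symSq_one : symSq (1 : K) 0 0 1 = 1 := by
  ext i j
  fin_cases i <;> fin_cases j <;> simp [symSq]

theorem axisRefl_mul_self {b : Fin 3 → K} (hb : disc b ≠ 0) : axisRefl b * axisRefl b = 1 := by
  have h : symSq (-b 1) (2 * b 0) (-2 * b 2) (b 1) * symSq (-b 1) (2 * b 0) (-2 * b 2) (b 1)
      = (disc b) ^ 2 • 1 := by
    rw [symSq_mul, ← symSq_one, ← symSq_smul]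
    congr 1 <;> simp only [disc] <;> ring
  rw [axisRefl, Matrix.smul_mul, Matrix.mul_smul, h, smul_smul, smul_smul]
  rw [show (disc b)⁻¹ * (disc b)⁻¹ * disc b ^ 2 = 1 by field_simp, one_smul]

/-- The axis of the reflection is fixed vectorwise. -/
theorem vecMul_axisRefl {b v : Fin 3 → K} (hb : disc b ≠ 0)
    (hv : v 0 * b 0 + v 1 * b 1 + v 2 * b 2 = 0) : Matrix.vecMul v (axisRefl b) = v := by
  have h : Matrix.vecMul v (symSq (-b 1) (2 * b 0) (-2 * b 2) (b 1)) = disc b • v := by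
    ext j
    fin_cases j <;>
      simp [symSq, disc, Matrix.vecMul, dotProduct, Fin.sum_univ_three]
    · linear_combination 4 * b 2 * hv
    · linear_combination -2 * b 1 * hv
    · linear_combination 4 * b 0 * hv
  rw [axisRefl, Matrix.vecMul_smul, h, smul_smul, inv_mul_cancel₀ hb, one_smul]

theorem Qf_vecMul_symSq (v : Fin 3 → K) (a b c d : K) :
    Qf K (Matrix.vecMul v (symSq a b c d)) = (a * d - b * c) ^ 2 * Qf K v := by
  simp [Qf, symSq, Matrix.vecMul, dotProduct, Fin.sum_univ_three]
  ring

theorem disc_mulVec_symSq (w : Fin 3 → K) (a b c d : K) :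
    disc (Matrix.mulVec (symSq a b c d) w) = (a * d - b * c) ^ 2 * disc w := by
  simp [disc, symSq, Matrix.mulVec, dotProduct, Fin.sum_univ_three]
  ring

theorem Qf_smul (k : K) (v : Fin 3 → K) : Qf K (k • v) = k ^ 2 * Qf K v := by
  simp [Qf]; ring

theorem disc_smul (k : K) (v : Fin 3 → K) : disc (k • v) = k ^ 2 * disc v := by
  simp [disc]; ring

theorem Qf_axisRefl {b : Fin 3 → K} (hb : disc b ≠ 0) (v : Fin 3 → K) :
    Qf K (Matrix.vecMul v (axisRefl b)) = Qf K v := by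
  rw [axisRefl, Matrix.vecMul_smul, Qf_smul, Qf_vecMul_symSq]
  have : -b 1 * b 1 - 2 * b 0 * (-2 * b 2) = - disc b := by simp only [disc]; ring
  rw [this]; field_simp

theorem disc_axisRefl {b : Fin 3 → K} (hb : disc b ≠ 0) (w : Fin 3 → K) :
    disc (Matrix.mulVec (axisRefl b) w) = disc w := by
  rw [axisRefl, Matrix.smul_mulVec, disc_smul, disc_mulVec_symSq]
  have : -b 1 * b 1 - 2 * b 0 * (-2 * b 2) = - disc b := by simp only [disc]; ring
  rw [this]; field_simp

theorem nonsq_sq_mul {k x : K} (hk : k ≠ 0) (hx : Nonsq K x) : Nonsq K (k ^ 2 * x) := by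
  rintro ⟨y, hy⟩
  exact hx ⟨y / k, by field_simp; linear_combination hy⟩

/-! ### Conjugation by the reflection and its fixed points in `H` -/

/-- Conjugation by the reflection acts on `symSq g` through `g ↦ D⁻¹ E g E`. -/
theorem axisRefl_conj (β : Fin 3 → K) (a b c d : K) :
    ∃ a' b' c' d' : K, axisRefl β * symSq a b c d * axisRefl β = symSq a' b' c' d' ∧
      a' = (disc β)⁻¹ * ((-β 1 * a + 2 * β 0 * c) * (-β 1) + (-β 1 * b + 2 * β 0 * d) * (-2 * β 2)) ∧
      b' = (disc β)⁻¹ * ((-β 1 * a + 2 * β 0 * c) * (2 * β 0) + (-β 1 * b + 2 * β 0 * d) * β 1) ∧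
      c' = (disc β)⁻¹ * ((-2 * β 2 * a + β 1 * c) * (-β 1) + (-2 * β 2 * b + β 1 * d) * (-2 * β 2)) ∧
      d' = (disc β)⁻¹ * ((-2 * β 2 * a + β 1 * c) * (2 * β 0) + (-2 * β 2 * b + β 1 * d) * β 1) := by
  refine ⟨_, _, _, _, ?_, rfl, rfl, rfl, rfl⟩
  rw [symSq_smul, axisRefl, Matrix.smul_mul, Matrix.mul_smul, Matrix.smul_mul, symSq_mul, symSq_mul,
    smul_smul, sq]

theorem conj_mem_Hset {β : Fin 3 → K} (hβ : disc β ≠ 0) {M : Matrix (Fin 3) (Fin 3) K}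
    (hM : M ∈ Hset K) : axisRefl β * M * axisRefl β ∈ Hset K := by
  obtain ⟨a, b, c, d, hdet, rfl⟩ := hM
  obtain ⟨a', b', c', d', h, ha, hb, hc, hd⟩ := axisRefl_conj β a b c d
  refine ⟨a', b', c', d', ?_, h⟩
  have h2 : (a' * d' - b' * c') * disc β ^ 2 = disc β ^ 2 * (a * d - b * c) := by
    rw [ha, hb, hc, hd]
    field_simp
    simp only [disc]
    ring
  rw [hdet] at h2
  have : disc β ^ 2 ≠ 0 := pow_ne_zero 2 hβ
  apply mul_right_cancel₀ this
  rw [h2]; ring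

theorem trace_conj {β : Fin 3 → K} (hβ : disc β ≠ 0) (M : Matrix (Fin 3) (Fin 3) K) :
    Matrix.trace (axisRefl β * M * axisRefl β) = Matrix.trace M := by
  rw [Matrix.trace_mul_comm, ← mul_assoc, axisRefl_mul_self hβ, one_mul]

/-- The symmetric square determines an element of `SL(2)` up to sign. -/
theorem symSq_inj {a b c d a' b' c' d' : K} (h2 : (2 : K) ≠ 0)
    (hdet : a * d - b * c = 1)
    (h : symSq a' b' c' d' = symSq a b c d) :
    (a' = a ∧ b' = b ∧ c' = c ∧ d' = d) ∨ (a' = -a ∧ b' = -b ∧ c' = -c ∧ d' = -d) := by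
  have e (i j : Fin 3) := congrFun (congrFun h i) j
  have h00 := e 0 0
  have h01 := e 0 1
  have h02 := e 0 2
  have h10 := e 1 0
  have h11 := e 1 1
  have h12 := e 1 2
  have h20 := e 2 0
  have h21 := e 2 1
  have h22 := e 2 2
  simp only [symSq, Matrix.of_apply, Matrix.cons_val] at h00 h01 h02 h10 h11 h12 h20 h21 h22
  rw [sq_eq_sq_iff_eq_or_eq_neg] at h00 h02
  have hac : a' * c' = a * c := mul_left_cancel₀ h2 (by linear_combination h10)
  have hbd : b' * d' = b * d := mul_left_cancel₀ h2 (by linear_combination h12)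
  by_cases ha : a = 0
  · have ha' : a' = 0 := by rcases h00 with h | h <;> simp [h, ha]
    have hb : b ≠ 0 := by rintro rfl; simp [ha] at hdet
    rcases h02 with rfl | rfl
    · refine Or.inl ⟨by rw [ha', ha], rfl, mul_left_cancel₀ hb ?_, mul_left_cancel₀ hb hbd⟩
      simpa [ha, ha'] using h11
    · refine Or.inr ⟨by rw [ha', ha, neg_zero], rfl, mul_left_cancel₀ hb ?_, mul_left_cancel₀ hb ?_⟩
      · simp only [ha, ha'] at h11
        linear_combination -h11
      · linear_combination -hbd
  · rcases h00 with rfl | rfl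
    · have hb := mul_left_cancel₀ ha h01
      have hc := mul_left_cancel₀ ha hac
      refine Or.inl ⟨rfl, hb, hc, mul_left_cancel₀ ha ?_⟩
      rw [hb, hc] at h11
      linear_combination h11
    · have hb : b' = -b := mul_left_cancel₀ ha (by linear_combination -h01)
      have hc : c' = -c := mul_left_cancel₀ ha (by linear_combination -hac)
      refine Or.inr ⟨rfl, hb, hc, mul_left_cancel₀ ha ?_⟩
      rw [hb, hc] at h11
      linear_combination -h11

/-- An element of `H` commuting with the reflection comes from a `g` of trace zero, or is the
identity, or has `(tr g)² - 4` a nonzero square. -/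
theorem fixed_cases {β : Fin 3 → K} (h2 : (2 : K) ≠ 0) (hβ : disc β ≠ 0)
    (hsq : IsSquare (disc β)) {M : Matrix (Fin 3) (Fin 3) K} (hM : M ∈ Hset K)
    (hfix : axisRefl β * M * axisRefl β = M) :
    Matrix.trace M + 1 = 0 ∨ M = 1 ∨
      (Matrix.trace M + 1 - 4 ≠ 0 ∧ IsSquare (Matrix.trace M + 1 - 4)) := by
  obtain ⟨a, b, c, d, hdet, rfl⟩ := hM
  change axisRefl β * symSq a b c d * axisRefl β = symSq a b c d at hfix
  obtain ⟨a', b', c', d', h, ha, hb, hc, hd⟩ := axisRefl_conj β a b c d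
  rw [h] at hfix
  have htr : Matrix.trace (symSq a b c d) + 1 = (a + d) ^ 2 := by
    simp [symSq, Matrix.trace, Fin.sum_univ_three]
    linear_combination -hdet
  change Matrix.trace (symSq a b c d) + 1 = 0 ∨ symSq a b c d = 1 ∨
      (Matrix.trace (symSq a b c d) + 1 - 4 ≠ 0 ∧ IsSquare (Matrix.trace (symSq a b c d) + 1 - 4))
  rw [htr]
  rcases symSq_inj h2 hdet hfix with ⟨e1, e2, e3, e4⟩ | ⟨e1, -, -, e4⟩
  · right
    rw [e1, eq_inv_mul_iff_mul_eq₀ hβ] at ha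
    rw [e2, eq_inv_mul_iff_mul_eq₀ hβ] at hb
    rw [e3, eq_inv_mul_iff_mul_eq₀ hβ] at hc
    rw [e4, eq_inv_mul_iff_mul_eq₀ hβ] at hd
    -- the entries of `E g = g E`: the vector `(b, d - a, -c)` is proportional to `β`
    have h2D : 2 * disc β ≠ 0 := mul_ne_zero h2 hβ
    have r1 : β 0 * c + β 2 * b = 0 := by
      apply (mul_eq_zero.1 (?_ : 2 * disc β * _ = 0)).resolve_left h2D
      simp only [disc] at ha hb ⊢
      linear_combination β 1 * ha + 2 * β 2 * hb
    have r2 : β 0 * (d - a) - β 1 * b = 0 := by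
      apply (mul_eq_zero.1 (?_ : 2 * disc β * _ = 0)).resolve_left h2D
      simp only [disc] at ha hb ⊢
      linear_combination -2 * β 0 * ha - β 1 * hb
    have r3 : β 2 * (d - a) + β 1 * c = 0 := by
      apply (mul_eq_zero.1 (?_ : 2 * disc β * _ = 0)).resolve_left h2D
      simp only [disc] at hc hd ⊢
      linear_combination β 1 * hc + 2 * β 2 * hd
    -- `z / disc β` is the factor of proportionality
    obtain ⟨z, hz⟩ : ∃ z, z = β 1 * (d - a) + 2 * β 0 * c - 2 * β 2 * b := ⟨_, rfl⟩
    have v0 : disc β * b = z * β 0 := by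
      rw [hz, disc]
      linear_combination -β 1 * r2 - 2 * β 0 * r1
    have v1 : disc β * (d - a) = z * β 1 := by
      rw [hz, disc]
      linear_combination -2 * β 0 * r3 - 2 * β 2 * r2
    have v2 : disc β * (-c) = z * β 2 := by
      rw [hz, disc]
      linear_combination -β 1 * r3 + 2 * β 2 * r1
    have key : disc β * ((a + d) ^ 2 - 4) = z ^ 2 := by
      apply mul_left_cancel₀ hβ
      have hD : disc β = β 1 ^ 2 - 4 * β 0 * β 2 := rfl
      linear_combination (disc β * (d - a) + z * β 1) * v1 - 4 * disc β * (-c) * v0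
        - 4 * z * β 0 * v2 - z ^ 2 * hD + 4 * disc β ^ 2 * hdet
    by_cases hz0 : z = 0
    · left
      have hb0 : b = 0 := by simpa [hz0, hβ] using v0
      have hc0 : c = 0 := by simpa [hz0, hβ] using v2
      have had : d - a = 0 := by simpa [hz0, hβ] using v1
      obtain rfl : d = a := sub_eq_zero.1 had
      have hdd : d * d = 1 := by simpa [hb0] using hdet
      have : symSq d b c d = d ^ 2 • symSq 1 0 0 1 := by
        rw [← symSq_smul, hb0, hc0]; simp
      rw [this, symSq_one, sq, hdd, one_smul]
    · right
      refine ⟨fun h0 => hz0 ?_, ?_⟩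
      · rw [h0, mul_zero] at key
        exact pow_eq_zero_iff two_ne_zero |>.1 key.symm
      · obtain ⟨δ, hδ⟩ := hsq
        have hδ0 : δ ≠ 0 := by rintro rfl; exact hβ (by simpa using hδ)
        refine ⟨z / δ, ?_⟩
        rw [hδ] at key
        field_simp
        linear_combination key
  · left
    -- `D⁻¹ E g E` has the trace of `g`, so the sign `-` gives `2 tr g = 0`
    have h0 : a' + d' = a + d := by
      rw [ha, hd]
      field_simp
      simp only [disc]
      ring
    have : 2 * (a + d) = 0 := by
      rw [e1, e4] at h0
      linear_combination -h0
    rw [(mul_eq_zero.1 this).resolve_left h2]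
    simp

/-! ### Invariance of the sets `U` -/

/-- A rescaled image under the reflection of a point outside `N(r)` is again outside `N(r)`,
if `r` lies on the axis. -/
theorem transfer_mem (h3 : Fintype.card K % 4 = 3) {β : Fin 3 → K} (hβ : disc β ≠ 0)
    {r u u' : Pt K} (hr : r.rep 0 * β 0 + r.rep 1 * β 1 + r.rep 2 * β 2 = 0)
    {k : K} (hk : k ≠ 0) (hu : u'.rep = k • Matrix.vecMul u.rep (axisRefl β))
    (hmem : u ∈ {u | Internal K u} \ NbhdSet K r) :
    u' ∈ {u | Internal K u} \ NbhdSet K r := by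
  obtain ⟨hI, hN⟩ := hmem
  refine ⟨?_, ?_⟩
  · change Nonsq K _
    rw [hu, Qf_smul, Qf_axisRefl hβ]
    exact nonsq_sq_mul hk hI
  · rw [NbhdSet, if_neg (by omega)] at hN ⊢
    rintro ⟨-, m, hm, hrm, hum⟩
    apply hN
    refine ⟨hI, ?_⟩
    have hw : Matrix.mulVec (axisRefl β) m.rep ≠ 0 := by
      intro h0
      apply m.rep_nonzero
      have := congrArg (Matrix.mulVec (axisRefl β)) h0
      rwa [Matrix.mulVec_mulVec, axisRefl_mul_self hβ, Matrix.one_mulVec,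
        Matrix.mulVec_zero] at this
    obtain ⟨t, ht⟩ := Projectivization.exists_smul_eq_mk_rep K _ hw
    have on (x : Pt K) (w : Fin 3 → K) :
        x.rep 0 * w 0 + x.rep 1 * w 1 + x.rep 2 * w 2 = x.rep ⬝ᵥ w := by
      simp [dotProduct, Fin.sum_univ_three]
    refine ⟨Projectivization.mk K _ hw, ?_, ?_, ?_⟩
    · change Nonsq K (disc _)
      rw [← ht, Units.smul_def, disc_smul, disc_axisRefl hβ]
      exact nonsq_sq_mul t.ne_zero hm
    · unfold OnL at hrm ⊢
      rw [on] at hrm ⊢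
      rw [← ht, Units.smul_def, dotProduct_smul, Matrix.dotProduct_mulVec,
        vecMul_axisRefl hβ hr, hrm, smul_zero]
    · unfold OnL at hum ⊢
      rw [on] at hum ⊢
      rw [hu, smul_dotProduct, smul_eq_mul] at hum
      rw [← ht, Units.smul_def, dotProduct_smul, Matrix.dotProduct_mulVec,
        (mul_eq_zero.1 hum).resolve_left hk, smul_zero]

theorem vecMul_Hset_ne_zero {M : Matrix (Fin 3) (Fin 3) K} (hM : M ∈ Hset K) {v : Fin 3 → K}
    (hv : v ≠ 0) : Matrix.vecMul v M ≠ 0 := by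
  obtain ⟨a, b, c, d, hdet, rfl⟩ := hM
  intro h0
  apply hv
  have h1 : symSq a b c d * symSq d (-b) (-c) a = 1 := by
    rw [symSq_mul, ← symSq_one]
    congr 1
    · linear_combination hdet
    · ring
    · ring
    · linear_combination hdet
  have := congrArg (fun w => Matrix.vecMul w (symSq d (-b) (-c) a)) h0
  change Matrix.vecMul (Matrix.vecMul v (symSq a b c d)) _ = Matrix.vecMul 0 _ at this
  rwa [Matrix.vecMul_vecMul, h1, Matrix.vecMul_one, Matrix.zero_vecMul] at this

theorem actPt_rep {M : Matrix (Fin 3) (Fin 3) K} (hM : M ∈ Hset K) (p : Pt K) :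
    ∃ k : K, k ≠ 0 ∧ (actPt K M p).rep = k • Matrix.vecMul p.rep M := by
  have h := vecMul_Hset_ne_zero hM p.rep_nonzero
  rw [actPt, dif_pos h]
  obtain ⟨t, ht⟩ := Projectivization.exists_smul_eq_mk_rep K _ h
  exact ⟨t, t.ne_zero, by rw [← ht, Units.smul_def]⟩

theorem conj_mem_Uset (h3 : Fintype.card K % 4 = 3) {β : Fin 3 → K} (hβ : disc β ≠ 0)
    {p r : Pt K} (hp : p.rep 0 * β 0 + p.rep 1 * β 1 + p.rep 2 * β 2 = 0)
    (hr : r.rep 0 * β 0 + r.rep 1 * β 1 + r.rep 2 * β 2 = 0)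
    {M : Matrix (Fin 3) (Fin 3) K} (hM : M ∈ Uset K p ({u | Internal K u} \ NbhdSet K r)) :
    axisRefl β * M * axisRefl β ∈ Uset K p ({u | Internal K u} \ NbhdSet K r) := by
  obtain ⟨hH, hW⟩ := hM
  have hH' := conj_mem_Hset hβ hH
  refine ⟨hH', ?_⟩
  obtain ⟨k, hk, hu⟩ := actPt_rep hH p
  obtain ⟨k', hk', hu'⟩ := actPt_rep hH' p
  refine transfer_mem h3 hβ hr (mul_ne_zero hk' (inv_ne_zero hk)) ?_ hW
  rw [hu', hu, ← Matrix.vecMul_vecMul, ← Matrix.vecMul_vecMul, vecMul_axisRefl hβ hp,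
    Matrix.smul_vecMul, smul_smul, mul_assoc, inv_mul_cancel₀ hk, mul_one]

/-! ### Counting -/

/-- A finite set with a fixed-point-free involution has even cardinality. -/
theorem even_ncard {α : Type*} [Finite α] (s : Set α) (f : α → α) (hf : ∀ x, f (f x) = x)
    (hs : ∀ x ∈ s, f x ∈ s) (hne : ∀ x ∈ s, f x ≠ x) : Even s.ncard := by
  have hfin : s.Finite := s.toFinite
  rw [Set.ncard_eq_toFinset_card s hfin, ← ZMod.natCast_eq_zero_iff_even]
  have := Finset.sum_involution (s := hfin.toFinset) (f := fun _ => (1 : ZMod 2))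
    (fun x _ => f x) (fun _ _ => by decide) (fun x hx _ => hne x (by simpa using hx))
    (fun x hx => by simpa using hs x (by simpa using hx)) (fun x _ => hf x)
  simpa using this

variable (K)

/-- `q ≡ 3 (mod 4)`, `p ≠ r` internal, line `pr` a secant:
`|U_{p,I∖N(r)} ∩ [4]|` is even, and `|U_{p,I∖N(r)} ∩ [π]|` is even for every
nonzero square `π ≠ 4` with `π - 4` a nonsquare. -/
theorem Upr_parity_secant_three (h3 : Fintype.card K % 4 = 3) (p r : Pt K)
    (hp : Internal K p) (hr : Internal K r) (hne : p ≠ r)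
    (hline : SecantThru K p r) :
    Even ((Uset K p ({u | Internal K u} \ NbhdSet K r) ∩ class4 K).ncard) ∧
    (∀ π : K, π ≠ 0 → IsSquare π → π ≠ 4 → Nonsq K (π - 4) →
      Even ((Uset K p ({u | Internal K u} \ NbhdSet K r) ∩ classOf K π).ncard)) := by
  obtain ⟨ℓ, hpl, hrl, hD, hsq⟩ := hline
  have hD' : disc ℓ.rep ≠ 0 := hD
  have h2 : (2 : K) ≠ 0 := by
    intro h
    have hdvd : ringChar K ∣ 2 := (CharP.cast_eq_zero_iff K (ringChar K) 2).1 (by exact_mod_cast h)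
    have hc : ringChar K = 2 :=
      ((Nat.dvd_prime Nat.prime_two).1 hdvd).resolve_left CharP.ringChar_ne_one
    have := FiniteField.even_card_iff_char_two.1 hc
    omega
  have h4 : (4 : K) ≠ 0 := by
    have := mul_ne_zero h2 h2
    norm_num at this
    exact this
  have hinv (M : Matrix (Fin 3) (Fin 3) K) :
      axisRefl ℓ.rep * (axisRefl ℓ.rep * M * axisRefl ℓ.rep) * axisRefl ℓ.rep = M := by
    have hS := axisRefl_mul_self hD'
    rw [← mul_assoc, ← mul_assoc, hS, one_mul, mul_assoc, hS, mul_one]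
  refine ⟨?_, fun π hπ0 _ _ hns => ?_⟩
  · refine even_ncard _ (fun M => axisRefl ℓ.rep * M * axisRefl ℓ.rep) hinv ?_ ?_
    · rintro M ⟨hU, hH, ht, h1⟩
      refine ⟨conj_mem_Uset h3 hD' hpl hrl hU, conj_mem_Hset hD' hH, ?_, fun h => h1 ?_⟩
      · rw [trace_conj hD', ht]
      · rw [← hinv M, h, mul_one, axisRefl_mul_self hD']
    · rintro M ⟨hU, hH, ht, h1⟩ hfix
      rcases fixed_cases h2 hD' hsq hH hfix with h | h | h
      · exact h4 (ht.symm.trans h)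
      · exact h1 h
      · exact h.1 (by rw [ht, sub_self])
  · refine even_ncard _ (fun M => axisRefl ℓ.rep * M * axisRefl ℓ.rep) hinv ?_ ?_
    · rintro M ⟨hU, hH, ht⟩
      exact ⟨conj_mem_Uset h3 hD' hpl hrl hU, conj_mem_Hset hD' hH, by rw [trace_conj hD', ht]⟩
    · rintro M ⟨hU, hH, ht⟩ hfix
      rcases fixed_cases h2 hD' hsq hH hfix with h | h | h
      · exact hπ0 (ht.symm.trans h)
      · refine hns ⟨0, ?_⟩
        -- the identity has `T = 4`, and `4 - 4 = 0` is a square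
        rw [← ht, h]
        simp
        norm_num
      · exact hns (ht ▸ h.2)

end ConicPaper
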